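/- arXiv:1208.1788 — 2 statements merged into one kernel-verified Lean document; each statement's English description precedes it below -/
import Mathlib

section
/- If 𝒜 is an infinite almost disjoint family of infinite subsets of ℕ (i.e., any two distinct members of 𝒜 have finite intersection), then the family of complements {ℕ ∖ A : A ∈ 𝒜} is centered. (Together with the trivial fact that A ∩ B infinite implies A ⊄* ℕ ∖ B, this shows that φ = id and ψ(A) = ℕ ∖ A form a Borel Tukey morphism witnessing 𝔞 ≥_BT 𝔭.) -/
/-- A family of subsets of ℕ is centered iff every nonempty finite subfamily
has infinite intersection. -/
def Centered (F : Set (Set ℕ)) : Prop :=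
  ∀ s : Finset (Set ℕ), ↑s ⊆ F → s.Nonempty → (⋂ A ∈ s, A).Infinite

theorem infinite_sdiff_biUnion {α ι : Type*} {B : Set α} {t : Set ι} {A : ι → Set α}
    (hB : B.Infinite) (ht : t.Finite) (hBA : ∀ i ∈ t, (B ∩ A i).Finite) :
    (B \ ⋃ i ∈ t, A i).Infinite := by
  rw [← Set.sdiff_self_inter, Set.inter_iUnion₂]
  exact hB.sdiff (ht.biUnion hBA)

section AlmostDisjoint

variable {α : Type*} {𝒜 : Set (Set α)}

-- An infinite member of `𝒜` outside `t` lies in the intersection up to finitely many points.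
theorem infinite_biInter_compl_of_pairwise_finite_inter {t : Set (Set α)}
    (hinf : {A ∈ 𝒜 | A.Infinite}.Infinite) (had : 𝒜.Pairwise fun A B => (A ∩ B).Finite)
    (ht : t.Finite) (ht𝒜 : t ⊆ 𝒜) :
    (⋂ A ∈ t, Aᶜ).Infinite := by
  obtain ⟨B, ⟨hB𝒜, hB⟩, hBt⟩ := hinf.exists_notMem_finite ht
  have hBA : ∀ A ∈ t, (B ∩ A).Finite := fun A hA =>
    had hB𝒜 (ht𝒜 hA) (ne_of_mem_of_not_mem hA hBt).symm
  rw [← Set.compl_iUnion₂]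
  exact (infinite_sdiff_biUnion hB ht hBA).mono fun _ hx => hx.2

theorem stmt4_general (hinf : {A ∈ 𝒜 | A.Infinite}.Infinite)
    (had : 𝒜.Pairwise fun A B => (A ∩ B).Finite) (s : Finset (Set α)) (hs : ↑s ⊆ compl '' 𝒜) :
    (⋂ A ∈ s, A).Infinite := by
  classical
  obtain ⟨t, ht𝒜, rfl⟩ := Finset.subset_set_image_iff.1 hs
  rw [Finset.set_biInter_finset_image]
  exact infinite_biInter_compl_of_pairwise_finite_inter hinf had t.finite_toSet ht𝒜

end AlmostDisjoint

/-- If `𝒜` is an infinite almost disjoint family of infinite subsets of ℕ,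
then the family of complements `{ℕ ∖ A : A ∈ 𝒜}` is centered. -/
theorem stmt4 (𝒜 : Set (Set ℕ)) (hinf : 𝒜.Infinite)
    (hmem : ∀ A ∈ 𝒜, A.Infinite)
    (had : ∀ A ∈ 𝒜, ∀ B ∈ 𝒜, A ≠ B → (A ∩ B).Finite) :
    Centered (compl '' 𝒜) := by
  intro s hs _
  exact stmt4_general (hinf.mono fun A hA => ⟨hA, hmem A hA⟩)
    (fun A hA B hB => had A hA B hB) s hs
end

section
/- Let X and Y be sets of natural numbers all of whose elements are ≥ 3, and suppose Y is not a subset of X. Then there is no Borel function ψ : 2^ℕ → 2^ℕ such that the image ψ(S) of every X-splitting family S ⊆ 2^ℕ is a Y-splitting family. (Together with the trivial morphisms for X ⊇ Y, this shows that the superset ordering on 𝒫(ω) embeds into the Borel Tukey ordering on triples defining the splitting number 𝔰.) -/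
/-- `c ∈ 2^ℕ` splits the infinite set `A ⊆ ℕ`: both `{k ∈ A | c k = false}`
and `{k ∈ A | c k = true}` are infinite. -/
def Splits (c : ℕ → Bool) (A : Set ℕ) : Prop :=
  {k ∈ A | c k = false}.Infinite ∧ {k ∈ A | c k = true}.Infinite

/-- `S ⊆ 2^ℕ` is an `(n,m)`-splitting family: for all infinite
`A_1, …, A_n ⊆ ℕ` some `c ∈ S` splits at least `m` of the `A_i`. -/
def NMSplitting (n m : ℕ) (S : Set (ℕ → Bool)) : Prop :=
  ∀ A : Fin n → Set ℕ, (∀ i, (A i).Infinite) →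
    ∃ c ∈ S, m ≤ {i : Fin n | Splits c (A i)}.ncard

/-- `S ⊆ 2^ℕ` is `X`-splitting: `S` is `(2^m, m)`-splitting for every `m ∈ X`. -/
def XSplitting (X : Set ℕ) (S : Set (ℕ → Bool)) : Prop :=
  ∀ m ∈ X, NMSplitting (2 ^ m) m S

/-!
A Borel `ψ` is continuous on a dense `Gδ` set `G`. Fix a nonprincipal ultrafilter `U` on `ℕ`; by
Baire there are a cylinder `C` and a bit `e` such that the `q ∈ G` with `ψ q j = e` for `U`-many `j`
are dense in `C`. As only finitely many initial segments have a given length, one obtains blocks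
`[I t, I (t + 1))` and coordinates `a t` such that every point of `C` can be modified on the `t`-th
block alone so as to force `ψ c (a t) = e`. On a co-infinite set of blocks `c` may instead copy any
given `g`.

Colour the blocks with `2 ^ m` colours, each used infinitely often, and let `S` consist of all `c`
for which `ψ c` splits fewer than `m` of the sets `A j = {a t | t has colour j}`. For `k ≠ m`,
assign to each of `2 ^ k` infinite sets a colour whose blocks meet it infinitely often: fewer than
`m` colours `R` capture at least `k` of the sets. Copying a splitting real on the blocks with colour
in `R` and forcing the value `e` on the others splits those `k` sets, while `ψ c` is constant on
`A j` for all `j ∉ R`.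
-/

open Filter Set Topology PiNat
open scoped Finset

section Cylinders

variable {E : ℕ → Type*}

theorem eventually_forall_exists_mem_cylinder [∀ n, Finite (E n)] {ι : Type*} {F : Filter ι}
    {p : ι → (∀ n, E n) → Prop} {C : Set (∀ n, E n)} {n : ℕ}
    (h : ∀ x ∈ C, ∃ q ∈ cylinder x n, ∀ᶠ j in F, p j q) :
    ∀ᶠ j in F, ∀ x ∈ C, ∃ q ∈ cylinder x n, p j q := by
  obtain ⟨T, hTC, hT⟩ := exists_subset_bijOn C fun x (i : Fin n) => x i
  have hTfin : T.Finite := hT.finite_iff_finite.2 (toFinite _)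
  choose! q hq hpq using h
  filter_upwards [(eventually_all_finite hTfin).2 fun y hy => hpq y (hTC hy)] with j hj x hx
  obtain ⟨y, hy, hyx⟩ := hT.surjOn (mem_image_of_mem _ hx)
  have hxy : y ∈ cylinder x n := mem_cylinder_iff.2 fun i hi => congrFun hyx ⟨i, hi⟩
  exact ⟨q y, mem_cylinder_iff_eq.1 hxy ▸ hq y (hTC hy), hj y hy⟩

theorem eventually_cylinder_subset [∀ n, TopologicalSpace (E n)] [∀ n, DiscreteTopology (E n)]
    {V : Set (∀ n, E n)} (hV : IsOpen V) {q : ∀ n, E n} (hq : q ∈ V) :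
    ∀ᶠ N in atTop, cylinder q N ⊆ V := by
  obtain ⟨_, ⟨x, n, rfl⟩, hqx, hxV⟩ :=
    (isTopologicalBasis_cylinders E).exists_subset_of_mem_open hq hV
  filter_upwards [eventually_ge_atTop n] with N hN
  exact (cylinder_anti q hN).trans (mem_cylinder_iff_eq.1 hqx ▸ hxV)

theorem exists_forall_mem_cylinder {I : ℕ → ℕ} (hI : StrictMono I) {y : ℕ → ∀ n, E n}
    (hy : ∀ t, y (t + 1) ∈ cylinder (y t) (I t)) : ∃ c, ∀ t, c ∈ cylinder (y t) (I t) := by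
  have hle : ∀ t t', t ≤ t' → y t' ∈ cylinder (y t) (I t) := fun t t' h => by
    induction t', h using Nat.le_induction with
    | base => exact self_mem_cylinder _ _
    | succ t' h ih =>
      exact mem_cylinder_iff_eq.1 ih ▸ cylinder_anti _ (hI.monotone h) (hy t')
  refine ⟨fun x => y (x + 1) x, fun t => mem_cylinder_iff.2 fun x hx => ?_⟩
  rcases le_total t (x + 1) with h | h
  · exact hle t (x + 1) h x hx
  · exact (hle (x + 1) t h x ((Nat.lt_succ_self x).trans_le hI.le_apply)).symm

/-- Every point of `C` can be steered into `V` on the block `[n, N)`: some point with the same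
coordinates below `n` has its whole cylinder of length `N` inside `V`, so that membership in `V` is
settled before coordinate `N`. -/
def SteersInto (C V : Set (∀ n, E n)) (n N : ℕ) : Prop :=
  ∀ x ∈ C, ∃ q ∈ cylinder x n, cylinder q N ⊆ V

theorem eventually_steersInto [∀ n, Finite (E n)] [∀ n, TopologicalSpace (E n)]
    [∀ n, DiscreteTopology (E n)] {C V : Set (∀ n, E n)} {n : ℕ} (hV : IsOpen V)
    (h : ∀ x ∈ C, (cylinder x n ∩ V).Nonempty) : ∀ᶠ N in atTop, SteersInto C V n N :=
  eventually_forall_exists_mem_cylinder fun x hx =>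
    let ⟨q, hq, hqV⟩ := h x hx
    ⟨q, hq, eventually_cylinder_subset hV hqV⟩

theorem steersInto_setOf_eqOn_Ico (C : Set (∀ n, E n)) (g : ∀ n, E n) (n N : ℕ) :
    SteersInto C {c | ∀ x ∈ Ico n N, c x = g x} n N := by
  intro x _
  refine ⟨fun i => if i < n then x i else g i, mem_cylinder_iff.2 fun i hi => if_pos hi, ?_⟩
  exact fun c hc i hi => (hc i hi.2).trans (if_neg hi.1.not_gt)

theorem exists_forall_mem_of_steersInto {s : ∀ n, E n} {I : ℕ → ℕ} (hI : StrictMono I)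
    {V : ℕ → Set (∀ n, E n)} (h : ∀ t, SteersInto (cylinder s (I 0)) (V t) (I t) (I (t + 1))) :
    ∃ c, ∀ t, c ∈ V t := by
  choose q hq hqV using h
  have hqC (t x hx) : q t x hx ∈ cylinder s (I 0) :=
    mem_cylinder_iff_eq.1 hx ▸ cylinder_anti x (hI.monotone t.zero_le) (hq t x hx)
  let y : ℕ → cylinder s (I 0) :=
    Nat.rec ⟨s, self_mem_cylinder s _⟩ fun t x => ⟨q t x x.2, hqC t x x.2⟩
  have hy (t) : (y (t + 1)).1 ∈ cylinder (y t).1 (I t) := hq t (y t).1 (y t).2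
  obtain ⟨c, hc⟩ := exists_forall_mem_cylinder hI hy
  exact ⟨c, fun t => hqV t (y t).1 (y t).2 (hc (t + 1))⟩

end Cylinders

section BaireCategory

variable {X : Type*} [TopologicalSpace X]

theorem exists_isOpen_eventually_residual_mem_iff {ι : Type*} [Countable ι] {A : ι → Set X}
    (hA : ∀ i, BaireMeasurableSet (A i)) :
    ∃ W : ι → Set X, (∀ i, IsOpen (W i)) ∧ ∀ᶠ x in residual X, ∀ i, x ∈ A i ↔ x ∈ W i := by
  choose W hW h using fun i => (hA i).residualEq_isOpen
  exact ⟨W, hW, eventually_countable_forall.2 fun i => (h i).mem_iff⟩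

theorem exists_nonempty_interior_closure_eventually_eq [BaireSpace X] [Nonempty X] {ι κ : Type*}
    [Finite κ] (U : Ultrafilter ι) (ψ : X → ι → κ) {G : Set X} (hG : Dense G) :
    ∃ e, (interior (closure {q ∈ G | ∀ᶠ j in U, ψ q j = e})).Nonempty := by
  refine nonempty_interior_of_iUnion_of_closed (fun _ => isClosed_closure) ?_
  rw [← closure_iUnion_of_finite, ← dense_iff_closure_eq]
  refine hG.mono fun q hq => mem_iUnion.2 ?_
  obtain ⟨e, he⟩ := (Ultrafilter.eventually_exists_iff (P := fun e j => ψ q j = e)).1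
    (Eventually.of_forall fun j => ⟨ψ q j, rfl⟩)
  exact ⟨e, hq, he⟩

theorem eventually_residual_infinite_setOf_apply_eq {κ : Type*} [TopologicalSpace κ]
    [DiscreteTopology κ] {B : Set ℕ} (hB : B.Infinite) (b : κ) :
    ∀ᶠ g in residual (ℕ → κ), {k ∈ B | g k = b}.Infinite := by
  have hres (n : ℕ) : ∀ᶠ g in residual (ℕ → κ), ∃ k > n, k ∈ B ∧ g k = b := by
    refine residual_of_dense_open ?_ (dense_iff_inter_open.2 ?_)
    · have hopen (k : ℕ) : IsOpen {g : ℕ → κ | g k = b} :=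
        isOpen_discrete {b} |>.preimage (f := fun g : ℕ → κ => g k) (continuous_apply k)
      simp only [ofPred_exists, ofPred_and]
      exact isOpen_iUnion fun k => isOpen_const.inter (isOpen_const.inter (hopen k))
    · rintro V hV ⟨x, hx⟩
      obtain ⟨N, hN⟩ := (eventually_cylinder_subset hV hx).exists
      obtain ⟨k, hkB, hk⟩ := hB.exists_gt (max n N)
      have hupd : Function.update x k b ∈ cylinder x N :=
        cylinder_anti x ((le_max_right n N).trans hk.le) (update_mem_cylinder x k b)
      exact ⟨_, hN hupd, k, (le_max_left n N).trans_lt hk, hkB, Function.update_self k b x⟩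
  filter_upwards [eventually_countable_forall.2 hres] with g hg
  exact Nat.frequently_atTop_iff_infinite.1 (frequently_atTop'.2 hg)

end BaireCategory

theorem exists_forall_splits {ι : Type*} [Countable ι] {B : ι → Set ℕ}
    (hB : ∀ i, (B i).Infinite) : ∃ g, ∀ i, Splits g (B i) := by
  have hres : ∀ᶠ g in residual (ℕ → Bool), ∀ i, Splits g (B i) :=
    eventually_countable_forall.2 fun i =>
      (eventually_residual_infinite_setOf_apply_eq (hB i) false).and
        (eventually_residual_infinite_setOf_apply_eq (hB i) true)
  exact (dense_of_mem_residual hres).nonempty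

theorem Splits.of_eqOn {c g : ℕ → Bool} {A B : Set ℕ} (h : Splits g A) (hAB : A ⊆ B)
    (hc : EqOn c g A) : Splits c B :=
  ⟨h.1.mono fun _ hx => ⟨hAB hx.1, (hc hx.1).trans hx.2⟩,
    h.2.mono fun _ hx => ⟨hAB hx.1, (hc hx.1).trans hx.2⟩⟩

theorem not_splits_of_forall_eq {c : ℕ → Bool} {A : Set ℕ} {e : Bool} (h : ∀ x ∈ A, c x = e) :
    ¬ Splits c A := by
  rintro ⟨hfalse, htrue⟩
  obtain ⟨x, hxA, hx⟩ := hfalse.nonempty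
  obtain ⟨y, hyA, hy⟩ := htrue.nonempty
  exact Bool.false_ne_true <| hx.symm.trans <| (h x hxA).trans <| (h y hyA).symm.trans hy

section Coding

theorem exists_cylinder_forall_frequently_apply_eq (ψ : (ℕ → Bool) → (ℕ → Bool))
    {G : Set (ℕ → Bool)} (hG : Dense G) :
    ∃ s n₀ e, ∀ n, ∃ᶠ j in atTop, ∀ x ∈ cylinder s n₀, ∃ q ∈ cylinder x n, q ∈ G ∧ ψ q j = e := by
  obtain ⟨e, s, hs⟩ := exists_nonempty_interior_closure_eventually_eq (hyperfilter ℕ) ψ hG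
  obtain ⟨n₀, hn₀⟩ := (eventually_cylinder_subset isOpen_interior hs).exists
  refine ⟨s, n₀, e, fun n => ?_⟩
  have hU : ∀ᶠ j in hyperfilter ℕ, ∀ x ∈ cylinder s n₀, ∃ q ∈ cylinder x n, q ∈ G ∧ ψ q j = e := by
    refine eventually_forall_exists_mem_cylinder fun x hx => ?_
    obtain ⟨q, hqx, hqG, hq⟩ := mem_closure_iff.1 (interior_subset (hn₀ hx)) _
      (isOpen_cylinder _ x n) (self_mem_cylinder x n)
    exact ⟨q, hqx, hq.mono fun j hj => ⟨hqG, hj⟩⟩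
  exact hU.frequently.filter_mono Nat.hyperfilter_le_atTop

variable {ψ : (ℕ → Bool) → (ℕ → Bool)}

theorem exists_steersInto (hψ : ∀ j b, BaireMeasurableSet {c | ψ c j = b}) :
    ∃ (s : ℕ → Bool) (n₀ : ℕ) (e : Bool) (V : ℕ → ℕ → Set (ℕ → Bool)),
      (∀ t n, ∃ a N, n ≤ a ∧ a < N ∧ SteersInto (cylinder s n₀) (V t a) n N) ∧
      ∀ (a : ℕ → ℕ) (c : ℕ → Bool) (T : Set ℕ), T.Infinite → (∀ t ∈ T, c ∈ V t (a t)) →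
        ∀ t ∈ T, ψ c (a t) = e := by
  obtain ⟨W, hW, hψW⟩ := exists_isOpen_eventually_residual_mem_iff
    (A := fun i : ℕ × Bool => {c | ψ c i.1 = i.2}) fun i => hψ i.1 i.2
  obtain ⟨G, hGW, hG, hGd⟩ := mem_residual.1 hψW
  obtain ⟨O, hO, rfl⟩ := hG.eq_iInter_nat
  obtain ⟨s, n₀, e, hs⟩ := exists_cylinder_forall_frequently_apply_eq ψ hGd
  -- Entering these sets for infinitely many `t` puts `c` in `⋂ r, O r`, where `W` decides `ψ c`.
  refine ⟨s, n₀, e, fun t a => (⋂ r ∈ Iic t, O r) ∩ W (a, e), fun t n => ?_, ?_⟩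
  · obtain ⟨a, ha, hna⟩ := ((hs n).and_eventually (eventually_ge_atTop n)).exists
    have hopen : IsOpen ((⋂ r ∈ Iic t, O r) ∩ W (a, e)) :=
      ((finite_Iic t).isOpen_biInter fun r _ => hO r).inter (hW _)
    have hmeet : ∀ x ∈ cylinder s n₀,
        (cylinder x n ∩ ((⋂ r ∈ Iic t, O r) ∩ W (a, e))).Nonempty := fun x hx => by
      obtain ⟨q, hqx, hqG, hq⟩ := ha x hx
      exact ⟨q, hqx, mem_iInter₂.2 fun r _ => mem_iInter.1 hqG r, (hGW hqG (a, e)).1 hq⟩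
    obtain ⟨N, hN, haN⟩ :=
      ((eventually_steersInto hopen hmeet).and (eventually_gt_atTop a)).exists
    exact ⟨a, N, hna, haN, hN⟩
  · intro a c T hT hc t ht
    have hcG : c ∈ ⋂ r, O r := mem_iInter.2 fun r => by
      obtain ⟨t', ht', hrt'⟩ := hT.exists_gt r
      exact mem_iInter₂.1 (hc t' ht').1 r hrt'.le
    exact (hGW hcG (a t, e)).2 (hc t ht).2

theorem exists_strictMono_blocks_forcing_apply_eq
    (hψ : ∀ j b, BaireMeasurableSet {c | ψ c j = b}) :
    ∃ (I a : ℕ → ℕ) (e : Bool), StrictMono I ∧ StrictMono a ∧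
      ∀ D : Set ℕ, Dᶜ.Infinite → ∀ g : ℕ → Bool, ∃ c,
        (∀ t ∈ D, ∀ x ∈ Ico (I t) (I (t + 1)), c x = g x) ∧ ∀ t ∉ D, ψ c (a t) = e := by
  classical
  obtain ⟨s, n₀, e, V, hV, hVe⟩ := exists_steersInto hψ
  choose a N hle hlt hsteer using hV
  let I : ℕ → ℕ := Nat.rec n₀ N
  have hI : StrictMono I := strictMono_nat_of_lt_succ fun t => (hle t (I t)).trans_lt (hlt t (I t))
  have ha : StrictMono fun t => a t (I t) :=
    strictMono_nat_of_lt_succ fun t => (hlt t (I t)).trans_le (hle (t + 1) (I (t + 1)))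
  refine ⟨I, fun t => a t (I t), e, hI, ha, fun D hD g => ?_⟩
  obtain ⟨c, hc⟩ := exists_forall_mem_of_steersInto (s := s) hI
    (V := fun t => if t ∈ D then {c | ∀ x ∈ Ico (I t) (I (t + 1)), c x = g x} else V t (a t (I t)))
    fun t => by
      split_ifs with ht
      · exact steersInto_setOf_eqOn_Ico _ g _ _
      · exact hsteer t (I t)
  have hcD : ∀ t ∈ D, ∀ x ∈ Ico (I t) (I (t + 1)), c x = g x := fun t ht => by
    simpa only [if_pos ht, mem_ofPred_eq] using hc t
  have hcV : ∀ t ∈ Dᶜ, c ∈ V t (a t (I t)) := fun t ht => by simpa only [if_neg ht] using hc t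
  exact ⟨c, hcD, hVe _ c Dᶜ hD hcV⟩

end Coding

section Counting

open Finset

theorem exists_subset_card_eq_mul_sum_le {β : Type*} (s : Finset β) (w : β → ℕ) {r : ℕ}
    (hr : r ≤ #s) : ∃ R ⊆ s, #R = r ∧ r * ∑ b ∈ s, w b ≤ #s * ∑ b ∈ R, w b := by
  classical
  induction hr using Nat.decreasingInduction with
  | self => exact ⟨s, subset_rfl, rfl, le_rfl⟩
  | of_succ r _ ih =>
    obtain ⟨R, hRs, hR, hle⟩ := ih
    obtain ⟨b, hb, hmin⟩ := R.exists_min_image w (card_pos.1 (by omega))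
    refine ⟨R.erase b, (erase_subset b R).trans hRs, by rw [card_erase_of_mem hb, hR]; rfl, ?_⟩
    have hsum := add_sum_erase R w hb
    have hwb : r * w b ≤ ∑ x ∈ R.erase b, w x := by
      have := card_nsmul_le_sum (R.erase b) w (w b) fun x hx => hmin x (mem_of_mem_erase hx)
      rwa [card_erase_of_mem hb, hR, smul_eq_mul, Nat.add_sub_cancel] at this
    refine le_of_mul_le_mul_left (a := r + 1) ?_ r.succ_pos
    calc (r + 1) * (r * ∑ b ∈ s, w b) = r * ((r + 1) * ∑ b ∈ s, w b) := by ring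
      _ ≤ r * (#s * (w b + ∑ x ∈ R.erase b, w x)) := by rw [hsum]; gcongr
      _ = #s * (r * w b + r * ∑ x ∈ R.erase b, w x) := by ring
      _ ≤ #s * (∑ x ∈ R.erase b, w x + r * ∑ x ∈ R.erase b, w x) := by gcongr
      _ = (r + 1) * (#s * ∑ x ∈ R.erase b, w x) := by ring

theorem mul_two_pow_le_sub_one_mul_two_pow {m k : ℕ} (hm : 3 ≤ m) (hk : m < k) :
    k * 2 ^ m ≤ (m - 1) * 2 ^ k := by
  induction k, hk using Nat.le_induction with
  | base =>
    calc (m + 1) * 2 ^ m ≤ (m - 1) * 2 * 2 ^ m := by gcongr; omega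
      _ = (m - 1) * 2 ^ (m + 1) := by ring
  | succ k hk ih =>
    calc (k + 1) * 2 ^ m ≤ 2 * k * 2 ^ m := by gcongr; omega
      _ ≤ 2 * ((m - 1) * 2 ^ k) := by rw [mul_assoc]; gcongr
      _ = (m - 1) * 2 ^ (k + 1) := by ring

theorem exists_card_lt_le_card_filter_mem {k m : ℕ} (hm : 3 ≤ m) (hkm : k ≠ m)
    (f : Fin (2 ^ k) → Fin (2 ^ m)) :
    ∃ R : Finset (Fin (2 ^ m)), #R < m ∧ k ≤ #{i | f i ∈ R} := by
  rcases hkm.lt_or_gt with hlt | hgt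
  · obtain ⟨F, -, hF⟩ := exists_subset_card_eq (s := (univ : Finset (Fin (2 ^ k)))) (n := k)
      (by simpa using Nat.lt_two_pow_self.le)
    have hsub : F ⊆ univ.filter fun i => f i ∈ F.image f := fun i hi => by
      simpa using ⟨i, hi, rfl⟩
    exact ⟨F.image f, (card_image_le.trans hF.le).trans_lt hlt, hF.ge.trans (card_le_card hsub)⟩
  · have hcard : m - 1 ≤ #(univ : Finset (Fin (2 ^ m))) := by
      simpa using m.pred_le.trans Nat.lt_two_pow_self.le
    obtain ⟨R, -, hR, hle⟩ := exists_subset_card_eq_mul_sum_le univ (fun j => #{i | f i = j}) hcard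
    refine ⟨R, by omega, le_of_mul_le_mul_left (a := 2 ^ m) ?_ (by positivity)⟩
    simp only [sum_card_fiberwise_eq_card_filter, Finset.mem_univ, filter_true, Finset.card_univ,
      Fintype.card_fin] at hle
    exact (mul_comm _ _).trans_le ((mul_two_pow_le_sub_one_mul_two_pow hm hgt).trans hle)

end Counting

theorem infinite_setOf_fin_ofNat_eq {N : ℕ} [NeZero N] (j : Fin N) :
    {t | Fin.ofNat N t = j}.Infinite := by
  refine (Nat.frequently_atTop_iff_infinite.1 (Nat.frequently_mod_eq j.2)).mono fun t ht => ?_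
  exact Fin.ext ht

theorem exists_infinite_inter_iUnion_Ico {κ : Type*} [Finite κ] {I : ℕ → ℕ} (hI : StrictMono I)
    (col : ℕ → κ) {B : Set ℕ} (hB : B.Infinite) :
    ∃ j, (B ∩ ⋃ t ∈ col ⁻¹' {j}, Ico (I t) (I (t + 1))).Infinite := by
  by_contra! hfin
  refine (hB.sdiff (finite_Iio (I 0))) ((finite_iUnion hfin).subset fun x hx => ?_)
  have hcover : x ∈ ⋃ t, Ico (I t) (I (t + 1)) :=
    (iUnion_Ico_map_succ_eq_Ici (fun t => hI.monotone t.zero_le)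
      hI.not_bddAbove_range_of_wellFoundedLT).ge (mem_Ici.2 (not_lt.1 hx.2))
  obtain ⟨t, ht⟩ := mem_iUnion.1 hcover
  exact mem_iUnion.2 ⟨col t, hx.1, mem_iUnion₂.2 ⟨t, rfl, ht⟩⟩

theorem exists_not_nmSplitting_image {ψ : (ℕ → Bool) → (ℕ → Bool)}
    (hψ : ∀ j b, BaireMeasurableSet {c | ψ c j = b}) {N m : ℕ} [NeZero N] (hm : m ≤ N) :
    ∃ S, ¬ NMSplitting N m (ψ '' S) ∧ ∀ n k,
      (∀ f : Fin n → Fin N, ∃ R : Finset (Fin N), #R < m ∧ k ≤ #{i | f i ∈ R}) →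
        NMSplitting n k S := by
  obtain ⟨I, a, e, hI, ha, hblocks⟩ := exists_strictMono_blocks_forcing_apply_eq hψ
  let A : Fin N → Set ℕ := fun j => a '' {t | Fin.ofNat N t = j}
  have hA (j) : (A j).Infinite := (infinite_setOf_fin_ofNat_eq j).image ha.injective.injOn
  refine ⟨{c | {j | Splits (ψ c) (A j)}.ncard < m}, ?_, fun n k hcount B hB => ?_⟩
  · intro h
    obtain ⟨_, ⟨c, hc, rfl⟩, hle⟩ := h A hA
    exact hle.not_gt hc
  choose f hf using fun i => exists_infinite_inter_iUnion_Ico hI (Fin.ofNat N) (hB i)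
  obtain ⟨R, hRm, hkR⟩ := hcount f
  obtain ⟨g, hg⟩ := exists_forall_splits hf
  have hD : {t | Fin.ofNat N t ∈ R}ᶜ.Infinite := by
    obtain ⟨j, hj⟩ : ∃ j, j ∉ R := by
      by_contra! hall
      rw [Finset.eq_univ_iff_forall.2 hall, Finset.card_univ, Fintype.card_fin] at hRm
      omega
    exact (infinite_setOf_fin_ofNat_eq j).mono
      fun t (ht : Fin.ofNat N t = j) (htR : Fin.ofNat N t ∈ R) => hj (ht ▸ htR)
  obtain ⟨c, hcg, hce⟩ := hblocks _ hD g
  refine ⟨c, ?_, ?_⟩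
  · have hsub : {j | Splits (ψ c) (A j)} ⊆ R := fun j hj => by
      by_contra hjR
      refine not_splits_of_forall_eq (e := e) ?_ hj
      rintro _ ⟨t, rfl, rfl⟩
      exact hce t hjR
    exact ((ncard_le_ncard hsub).trans_eq (ncard_coe_finset R)).trans_lt hRm
  · refine hkR.trans ((ncard_coe_finset _).symm.trans_le (ncard_le_ncard fun i hi => ?_))
    refine (hg i).of_eqOn inter_subset_left fun x hx => ?_
    obtain ⟨t, ht, hxt⟩ := mem_iUnion₂.1 hx.2
    have hcol : Fin.ofNat N t = f i := ht
    have hfR : f i ∈ R := by simpa using hi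
    exact hcg t (hcol ▸ hfR : Fin.ofNat N t ∈ R) x hxt

theorem stmt19_general {X Y : Set ℕ} {m : ℕ} (hm : 3 ≤ m) (hmY : m ∈ Y) (hmX : m ∉ X) :
    ¬ ∃ ψ : (ℕ → Bool) → (ℕ → Bool),
      (∀ s, MeasurableSet s → BaireMeasurableSet (ψ ⁻¹' s)) ∧
      ∀ S : Set (ℕ → Bool), XSplitting X S → XSplitting Y (ψ '' S) := by
  rintro ⟨ψ, hψ, H⟩
  have hψj (j b) : BaireMeasurableSet {c | ψ c j = b} :=
    hψ ((fun x => x j) ⁻¹' {b}) (measurable_pi_apply j (measurableSet_singleton b))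
  obtain ⟨S, hS, hsplit⟩ := exists_not_nmSplitting_image hψj (m.lt_two_pow_self.le)
  exact hS <| H S (fun k hk => hsplit _ _ <|
    exists_card_lt_le_card_filter_mem hm fun hkm => hmX (hkm ▸ hk)) m hmY

/-- If `X, Y` are sets of naturals `≥ 3` and `Y ⊄ X`, then there is no Borel
`ψ : 2^ℕ → 2^ℕ` carrying every `X`-splitting family to a `Y`-splitting family.
(The superset ordering on 𝒫(ω) embeds into the Borel Tukey ordering on
triples defining 𝔰.) -/
theorem stmt19 (X Y : Set ℕ) (hX : ∀ m ∈ X, 3 ≤ m) (hY : ∀ m ∈ Y, 3 ≤ m)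
    (hYX : ¬ Y ⊆ X) :
    ¬ ∃ ψ : (ℕ → Bool) → (ℕ → Bool),
      Measurable ψ ∧
      ∀ S : Set (ℕ → Bool), XSplitting X S → XSplitting Y (ψ '' S) := by
  obtain ⟨m, hmY, hmX⟩ := Set.not_subset.1 hYX
  exact fun ⟨ψ, hψ, H⟩ => stmt19_general (hY m hmY) hmY hmX
    ⟨ψ, fun _ hs => (hψ hs).baireMeasurableSet, H⟩
end
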